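/- arXiv:2203.11190 — 2 statements merged into one kernel-verified Lean document; each statement's English description precedes it below -/
import Mathlib

section
/- Let n, k, ℓ be positive integers with ℓ ≤ k ≤ n, β ∈ (0,1), and let μ be a probability distribution on binom([n],k) with marginals p_i = P_{S∼μ}[i∈S]. Set t_i = ⌈(n/(βk))·p_i⌉ and |U| = ∑_{i=1}^n t_i. Then: (a) for every i with p_i ≥ √β·k/n one has p_i/t_i ≥ k/((1+√β)·|U|); and (b) letting R̄ = {i ∈ [n] : p_i ≥ √β·k/n}, the downed distribution μ_ℓ = μD_{k→ℓ} satisfies ∑_{T ∈ binom(R̄,ℓ)} μ_ℓ(T) ≥ 1 − √β·ℓ. -/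
open Finset

/-!
For (a), the scaled marginals `x i = n / (β * k) * p i` sum to `n / β`, so `n / β ≤ |U|`; and
rounding `x i ≥ 1 / √β` up to an integer increases it by a factor of at most `1 + √β`.
For (b), `T ∼ μ_ℓ` is a uniform `ℓ`-subset of `S ∼ μ`, so the marginals of `μ_ℓ` are
`ℓ / k * p i`. A union bound over the at most `n` elements outside `R̄`, each of marginal less than
`√β * k / n`, shows that `T` leaves `R̄` with probability at most `√β * ℓ`.
-/

section Ceil

variable {𝕜 : Type*} [Field 𝕜] [LinearOrder 𝕜] [IsStrictOrderedRing 𝕜] [FloorSemiring 𝕜]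

theorem natCeil_le_one_add_mul {ε x : 𝕜} (hx : 0 ≤ x) (hεx : 1 ≤ ε * x) :
    (⌈x⌉₊ : 𝕜) ≤ (1 + ε) * x := by
  linarith [Nat.ceil_lt_add_one hx]

theorem sum_div_mul_sum_natCeil_le_div_natCeil {ι : Type*} (s : Finset ι) (p : ι → 𝕜)
    {c ε : 𝕜} {i : ι} (hc : 0 < c) (hε : 0 ≤ ε) (hi : 1 ≤ ε * (c * p i)) :
    (∑ j ∈ s, p j) / ((1 + ε) * ∑ j ∈ s, (⌈c * p j⌉₊ : 𝕜)) ≤ p i / ⌈c * p i⌉₊ := by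
  have hx : 0 < c * p i := pos_of_mul_pos_right (one_pos.trans_le hi) hε
  have hceil : (0 : 𝕜) < ⌈c * p i⌉₊ := Nat.cast_pos.2 (Nat.ceil_pos.2 hx)
  have hsum : c * ∑ j ∈ s, p j ≤ ∑ j ∈ s, (⌈c * p j⌉₊ : 𝕜) := by
    rw [mul_sum]
    exact sum_le_sum fun j _ ↦ Nat.le_ceil _
  calc (∑ j ∈ s, p j) / ((1 + ε) * ∑ j ∈ s, (⌈c * p j⌉₊ : 𝕜))
      ≤ 1 / (c * (1 + ε)) := by
        refine div_le_of_le_mul₀ (by positivity) (by positivity) ?_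
        field_simp
        linarith
    _ ≤ p i / ⌈c * p i⌉₊ := by
        rw [div_le_div_iff₀ (by positivity) hceil]
        linarith [natCeil_le_one_add_mul hx.le hi]

end Ceil

theorem card_mul_card_filter_mem_powersetCard {α : Type*} [DecidableEq α] {S : Finset α} {i : α}
    (hi : i ∈ S) (ℓ : ℕ) :
    #S * #{T ∈ powersetCard ℓ S | i ∈ T} = ℓ * (#S).choose ℓ := by
  cases ℓ with
  | zero => simp
  | succ r =>
    have hcount : #{T ∈ powersetCard (r + 1) S | i ∈ T} = (#S - 1).choose r := by
      simpa using card_filter_powersetCard_subset {i} S (r + 1) (by simpa using hi) (by simp)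
    have hS : #S - 1 + 1 = #S := Nat.sub_add_cancel (card_pos.2 ⟨i, hi⟩)
    simpa only [hcount, hS, mul_comm (r + 1)] using Nat.add_one_mul_choose_eq (#S - 1) r

variable {α : Type*} [Fintype α] [DecidableEq α]

section Marginal

variable {M : Type*} [AddCommMonoid M]

/-- The marginal `P_{S ∼ μ}[i ∈ S]` of `i` under a distribution `μ` on sets, given by its weights.
A distribution on the `k`-element sets is encoded as a weight on all finite sets which vanishes off
the sets of cardinality `k`. -/
def marginal (μ : Finset α → M) (i : α) : M :=
  ∑ S with i ∈ S, μ S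

theorem sum_marginal (μ : Finset α → M) (A : Finset α) :
    ∑ i ∈ A, marginal μ i = ∑ S, #(A ∩ S) • μ S := by
  simp_rw [marginal, sum_filter]
  rw [sum_comm]
  simp_rw [← sum_filter, filter_mem_eq_inter, sum_const]

theorem sum_marginal_univ {k : ℕ} {μ : Finset α → M} (hsupp : ∀ S, μ S ≠ 0 → #S = k) :
    ∑ i, marginal μ i = k • ∑ S, μ S := by
  rw [sum_marginal, smul_sum]
  refine sum_congr rfl fun S _ ↦ ?_
  obtain hS | hS := eq_or_ne (μ S) 0
  · simp only [hS, smul_zero]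
  · rw [univ_inter, hsupp S hS]

theorem sum_not_subset_le_sum_marginal [PartialOrder M] [IsOrderedAddMonoid M]
    {μ : Finset α → M} (hμ : ∀ S, 0 ≤ μ S) (R : Finset α) :
    ∑ S with ¬ S ⊆ R, μ S ≤ ∑ i ∈ Rᶜ, marginal μ i := by
  rw [sum_marginal]
  refine (sum_le_sum fun S hS ↦ ?_).trans
    (sum_le_univ_sum_of_nonneg fun S ↦ nsmul_nonneg (hμ S) #(Rᶜ ∩ S))
  obtain ⟨i, hiS, hiR⟩ := not_subset.1 (mem_filter.1 hS).2
  have hcard : 1 ≤ #(Rᶜ ∩ S) := card_pos.2 ⟨i, mem_inter.2 ⟨mem_compl.2 hiR, hiS⟩⟩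
  simpa only [one_nsmul] using nsmul_le_nsmul_left (hμ S) hcard

end Marginal

section Down

variable {𝕜 : Type*} [Semifield 𝕜]

/-- The down operator `μ ↦ μ D_{k → ℓ}` from distributions on `k`-element sets to distributions on
`ℓ`-element sets, the latter extended by zero to all finite sets. -/
def down (k ℓ : ℕ) (μ : Finset α → 𝕜) (T : Finset α) : 𝕜 :=
  if #T = ℓ then (k.choose ℓ : 𝕜)⁻¹ * ∑ S with T ⊆ S, μ S else 0

theorem sum_subset_down (k ℓ : ℕ) (μ : Finset α → 𝕜) (R : Finset α) :
    ∑ T with T ⊆ R, down k ℓ μ T =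
      ∑ T with #T = ℓ ∧ T ⊆ R, (k.choose ℓ : 𝕜)⁻¹ * ∑ S with T ⊆ S, μ S := by
  simp_rw [down, ← sum_filter, filter_filter, and_comm]

theorem sum_filter_down (k ℓ : ℕ) (μ : Finset α → 𝕜) (P : Finset α → Prop) [DecidablePred P] :
    ∑ T with P T, down k ℓ μ T =
      (k.choose ℓ : 𝕜)⁻¹ * ∑ S, #{T ∈ powersetCard ℓ S | P T} * μ S := by
  simp_rw [down, ← sum_filter, ← mul_sum, filter_filter]
  congr 1
  rw [sum_comm' (t' := univ) (s' := fun S ↦ {T ∈ powersetCard ℓ S | P T}) fun T S ↦ by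
    simp only [mem_filter, mem_powersetCard, mem_univ]
    tauto]
  simp_rw [sum_const, nsmul_eq_mul]

variable {k ℓ : ℕ} {μ : Finset α → 𝕜}

theorem sum_down [CharZero 𝕜] (hℓk : ℓ ≤ k) (hsupp : ∀ S, μ S ≠ 0 → #S = k) :
    ∑ T, down k ℓ μ T = ∑ S, μ S := by
  have hchoose : (k.choose ℓ : 𝕜) ≠ 0 := Nat.cast_ne_zero.2 (Nat.choose_pos hℓk).ne'
  have hcount := sum_filter_down k ℓ μ (fun _ ↦ True)
  simp only [filter_true, card_powersetCard] at hcount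
  rw [hcount, inv_mul_eq_iff_eq_mul₀ hchoose, mul_sum]
  refine sum_congr rfl fun S _ ↦ ?_
  obtain hS | hS := eq_or_ne (μ S) 0
  · simp only [hS, mul_zero]
  · rw [hsupp S hS]

theorem marginal_down [CharZero 𝕜] (hk : k ≠ 0) (hℓk : ℓ ≤ k)
    (hsupp : ∀ S, μ S ≠ 0 → #S = k) (i : α) :
    marginal (down k ℓ μ) i = ℓ / k * marginal μ i := by
  have hk' : (k : 𝕜) ≠ 0 := Nat.cast_ne_zero.2 hk
  have hchoose : (k.choose ℓ : 𝕜) ≠ 0 := Nat.cast_ne_zero.2 (Nat.choose_pos hℓk).ne'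
  rw [marginal, sum_filter_down, inv_mul_eq_iff_eq_mul₀ hchoose, marginal, sum_filter, mul_sum,
    mul_sum]
  refine sum_congr rfl fun S _ ↦ ?_
  obtain hS | hS := eq_or_ne (μ S) 0
  · simp only [hS, mul_zero, ite_self]
  split_ifs with hi
  · have hcount : (#{T ∈ powersetCard ℓ S | i ∈ T} : 𝕜) = ℓ * k.choose ℓ / k := by
      rw [eq_div_iff hk', mul_comm]
      exact_mod_cast hsupp S hS ▸ card_mul_card_filter_mem_powersetCard hi ℓ
    rw [hcount]
    ring
  · have hempty : {T ∈ powersetCard ℓ S | i ∈ T} = ∅ :=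
      filter_eq_empty_iff.2 fun T hT hiT ↦ hi ((mem_powersetCard.1 hT).1 hiT)
    simp only [hempty, card_empty, Nat.cast_zero, zero_mul, mul_zero]

end Down

section UnionBound

variable {𝕜 : Type*} [Field 𝕜] [LinearOrder 𝕜] [IsStrictOrderedRing 𝕜]
  {k ℓ : ℕ} {μ : Finset α → 𝕜}

theorem down_nonneg (hμ : ∀ S, 0 ≤ μ S) (T : Finset α) : 0 ≤ down k ℓ μ T := by
  unfold down
  split_ifs
  · exact mul_nonneg (by positivity) (sum_nonneg fun S _ ↦ hμ S)
  · exact le_rfl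

theorem sum_sub_le_sum_subset_down (hk : k ≠ 0) (hℓk : ℓ ≤ k) (hμ : ∀ S, 0 ≤ μ S)
    (hsupp : ∀ S, μ S ≠ 0 → #S = k) (R : Finset α) :
    ∑ S, μ S - ℓ / k * ∑ i ∈ Rᶜ, marginal μ i ≤ ∑ T with T ⊆ R, down k ℓ μ T := by
  have hunion := sum_not_subset_le_sum_marginal (down_nonneg (k := k) (ℓ := ℓ) hμ) R
  simp_rw [marginal_down hk hℓk hsupp, ← mul_sum] at hunion
  have hsplit := sum_filter_add_sum_filter_not univ (· ⊆ R) (down k ℓ μ)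
  rw [sum_down hℓk hsupp] at hsplit
  linarith

theorem sum_sub_mul_card_le_sum_subset_down (hk : k ≠ 0) (hℓk : ℓ ≤ k) (hμ : ∀ S, 0 ≤ μ S)
    (hsupp : ∀ S, μ S ≠ 0 → #S = k) {R : Finset α} {δ : 𝕜} (hδ : 0 ≤ δ)
    (hR : ∀ i ∉ R, marginal μ i ≤ δ) :
    ∑ S, μ S - ℓ / k * (Fintype.card α * δ) ≤ ∑ T with T ⊆ R, down k ℓ μ T := by
  have hout : ∑ i ∈ Rᶜ, marginal μ i ≤ Fintype.card α * δ :=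
    calc ∑ i ∈ Rᶜ, marginal μ i ≤ #Rᶜ • δ :=
          sum_le_card_nsmul _ _ _ fun i hi ↦ hR i (mem_compl.1 hi)
      _ ≤ Fintype.card α * δ := by
          rw [nsmul_eq_mul]
          gcongr
          exact card_le_univ _
  calc ∑ S, μ S - ℓ / k * (Fintype.card α * δ)
      ≤ ∑ S, μ S - ℓ / k * ∑ i ∈ Rᶜ, marginal μ i := by gcongr
    _ ≤ ∑ T with T ⊆ R, down k ℓ μ T := sum_sub_le_sum_subset_down hk hℓk hμ hsupp R

end UnionBound

theorem isotropic_transformation_marginal_lower_bound_general {n k ℓ : ℕ}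
    (hn : Fintype.card α = n) (hk : 0 < k) (hℓk : ℓ ≤ k) {β : ℝ} (hβ : 0 < β)
    {μ : Finset α → ℝ} (hμ : ∀ S, 0 ≤ μ S) (hsupp : ∀ S, μ S ≠ 0 → #S = k) (hsum : ∑ S, μ S = 1)
    {p : α → ℝ} (hp : ∀ i, p i = marginal μ i)
    {t : α → ℕ} (ht : ∀ i, t i = ⌈(n : ℝ) / (β * k) * p i⌉₊)
    {R : Finset α} (hR : ∀ i, i ∈ R ↔ √β * k / n ≤ p i) :
    (∀ i, √β * k / n ≤ p i → (k : ℝ) / ((1 + √β) * (∑ j, t j : ℕ)) ≤ p i / t i) ∧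
      1 - √β * ℓ ≤ ∑ T with T ⊆ R, down k ℓ μ T := by
  obtain rfl : p = marginal μ := funext hp
  constructor
  · intro i hi
    have hn' : (0 : ℝ) < n := Nat.cast_pos.2 (hn ▸ Fintype.card_pos_iff.2 ⟨i⟩)
    have hlarge : 1 ≤ √β * (n / (β * k) * marginal μ i) :=
      calc 1 = √β * (n / (β * k) * (√β * k / n)) := by
            field_simp
            exact (Real.sq_sqrt hβ.le).symm
        _ ≤ √β * (n / (β * k) * marginal μ i) := by gcongr
    have hbound := sum_div_mul_sum_natCeil_le_div_natCeil univ (marginal μ) (by positivity)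
      (by positivity) hlarge
    rw [sum_marginal_univ hsupp, hsum, nsmul_one] at hbound
    simpa only [ht, Nat.cast_sum] using hbound
  · have hout : ∀ i ∉ R, marginal μ i ≤ √β * k / n := fun i hi ↦ (not_le.1 (mt (hR i).2 hi)).le
    have hloss : (ℓ : ℝ) / k * (n * (√β * k / n)) ≤ √β * ℓ :=
      calc (ℓ : ℝ) / k * (n * (√β * k / n)) = √β * ℓ * (n / n) := by field_simp
        _ ≤ √β * ℓ := mul_le_of_le_one_right (by positivity) (div_self_le_one _)
    have hmass := sum_sub_mul_card_le_sum_subset_down hk.ne' hℓk hμ hsupp (by positivity) hout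
    rw [hsum, hn] at hmass
    linarith

/-- Marginal lower bound for the isotropic transformation, and mass of the
downed distribution on elements with large marginals: (a) if `p_i ≥ √β·k/n` then
`p_i/t_i ≥ k/((1+√β)·|U|)`; (b) with `R̄ = {i : p_i ≥ √β·k/n}`,
`∑_{T ∈ binom(R̄,ℓ)} μ_ℓ(T) ≥ 1 − √β·ℓ`. -/
theorem isotropic_transformation_marginal_lower_bound (n k ℓ : ℕ)
    (hℓ : 0 < ℓ) (hℓk : ℓ ≤ k) (hkn : k ≤ n)
    (β : ℝ) (hβ : β ∈ Set.Ioo (0 : ℝ) 1)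
    (μ : Finset (Fin n) → ℝ)
    (hnn : ∀ S, 0 ≤ μ S) (hsupp : ∀ S, μ S ≠ 0 → S.card = k)
    (hsum : ∑ S, μ S = 1)
    (p : Fin n → ℝ)
    (hp : ∀ i, p i = ∑ S ∈ univ.filter (fun S : Finset (Fin n) => i ∈ S), μ S)
    (t : Fin n → ℕ) (ht : ∀ i, t i = ⌈((n : ℝ) / (β * k)) * p i⌉₊)
    (Ucard : ℕ) (hU : Ucard = ∑ i, t i)
    (R : Finset (Fin n)) (hR : R = univ.filter (fun i => Real.sqrt β * k / n ≤ p i)) :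
    (∀ i, Real.sqrt β * k / n ≤ p i →
      (k : ℝ) / ((1 + Real.sqrt β) * Ucard) ≤ p i / (t i : ℝ)) ∧
    (1 - Real.sqrt β * ℓ ≤
      ∑ T ∈ univ.filter (fun T : Finset (Fin n) => T.card = ℓ ∧ T ⊆ R),
        ((k.choose ℓ : ℝ))⁻¹ *
          ∑ S ∈ univ.filter (fun S : Finset (Fin n) => T ⊆ S), μ S) := by
  rw [hU, ← sum_subset_down]
  exact isotropic_transformation_marginal_lower_bound_general (Fintype.card_fin n)
    (hℓ.trans_le hℓk) hℓk hβ.1 hnn hsupp hsum hp ht fun i ↦ by rw [hR, mem_filter_univ]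
end

section
/- Let U be a finite set with |U| = m, let ℓ be a positive integer, and let ρ be a probability distribution on binom(U,ℓ). For 1 ≤ t ≤ ℓ let ρ_t = ρD_{ℓ→t}, i.e. ρ_t(T) = binom(ℓ,t)^{−1}·∑_{S⊇T} ρ(S) for T ∈ binom(U,t). For ε ≥ 0 define Ω̃_ε = {S ∈ binom(U,ℓ) : ρ_{|T|}(T) ≥ ε^{|T|} for every nonempty T ⊆ S}. If 0 ≤ ε ≤ 1/(2mℓ), then ∑_{S ∉ Ω̃_ε} ρ(S) ≤ 2mℓε. -/
open Finset
open scoped Classical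

/-!
If `S` is not well-represented, it contains some nonempty `T` with
`ρ_{|T|}(T) < ε ^ |T|`, and then the `ℓ`-sets above `T` have total mass at most
`binom(ℓ, |T|) ε ^ |T| ≤ (ℓ ε) ^ |T|`. A union bound over all nonempty `T ⊆ U` gives
`∑ (ℓ ε) ^ |T| = (1 + ℓ ε) ^ m - 1`, which is at most `2 m ℓ ε` as soon as `2 m ℓ ε ≤ 1`.
-/

theorem sum_biUnion_le {ι α M : Type*} [DecidableEq α] [AddCommMonoid M] [PartialOrder M]
    [IsOrderedAddMonoid M] {s : Finset ι} {t : ι → Finset α} {f : α → M}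
    (hf : ∀ i ∈ s, ∀ a ∈ t i, 0 ≤ f a) :
    ∑ a ∈ s.biUnion t, f a ≤ ∑ i ∈ s, ∑ a ∈ t i, f a := by
  induction s using Finset.induction_on with
  | empty => simp
  | insert i s hi ih =>
    rw [forall_mem_insert] at hf
    rw [biUnion_insert, sum_insert hi]
    calc ∑ a ∈ t i ∪ s.biUnion t, f a
        ≤ ∑ a ∈ t i ∪ s.biUnion t, f a + ∑ a ∈ t i ∩ s.biUnion t, f a :=
          le_add_of_nonneg_right <| sum_nonneg fun a ha => hf.1 a (mem_inter.mp ha).1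
      _ = ∑ a ∈ t i, f a + ∑ a ∈ s.biUnion t, f a := sum_union_inter
      _ ≤ ∑ a ∈ t i, f a + ∑ j ∈ s, ∑ a ∈ t j, f a := by gcongr; exact ih hf.2

theorem sum_pow_card_filter_nonempty {R : Type*} [CommRing R] (U : Type*) [Fintype U] (y : R) :
    ∑ T : Finset U with T.Nonempty, y ^ #T = (1 + y) ^ Fintype.card U - 1 := by
  have hall : ∑ T : Finset U, y ^ #T = (1 + y) ^ Fintype.card U := by
    simpa only [one_pow, mul_one, add_comm] using Fintype.sum_pow_mul_eq_add_pow U y 1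
  have hnonempty : ({T : Finset U | T.Nonempty} : Finset (Finset U)) = univ.erase ∅ := by
    ext T
    simp [nonempty_iff_ne_empty]
  rw [hnonempty, sum_erase_eq_sub (mem_univ ∅), hall, card_empty, pow_zero]

theorem one_add_pow_le_one_add_two_mul {R : Type*} [CommRing R] [LinearOrder R]
    [IsStrictOrderedRing R] {y : R} (hy : 0 ≤ y) {n : ℕ} (hny : 2 * n * y ≤ 1) :
    (1 + y) ^ n ≤ 1 + 2 * n * y := by
  induction n with
  | zero => simp
  | succ n ih =>
    push_cast at hny ⊢
    have hny' : 2 * n * y ≤ 1 := by linarith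
    calc (1 + y) ^ (n + 1) = (1 + y) ^ n * (1 + y) := pow_succ _ _
      _ ≤ (1 + 2 * n * y) * (1 + y) := by gcongr; exact ih hny'
      _ = 1 + 2 * n * y + y + 2 * n * y * y := by ring
      _ ≤ 1 + 2 * n * y + y + 1 * y := by gcongr
      _ = 1 + 2 * (n + 1) * y := by ring

section DownOperator

variable {U K : Type*} [Fintype U] [DecidableEq U] [Field K]

/-- The down operator applied to a weight `ρ` on `ℓ`-sets: `downWeight ℓ ρ T` is
`(ρ D_{ℓ→t})(T)` with the level `t` read off as `#T`. It is meaningful for `#T ≤ ℓ` only: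
above that level the binomial coefficient vanishes and the value is `0`. -/
def downWeight (ℓ : ℕ) (ρ : Finset U → K) (T : Finset U) : K :=
  (ℓ.choose #T : K)⁻¹ * ∑ S with T ⊆ S, ρ S

variable [LinearOrder K]

/-- The condition defining `Ω̃_ε` among the `ℓ`-sets: every nonempty subset `T` of `S` satisfies
`ρ_{|T|}(T) ≥ ε ^ |T|`. The size of `S` is not part of the condition. -/
def IsWellRepresented (ℓ : ℕ) (ρ : Finset U → K) (ε : K) (S : Finset U) : Prop :=
  ∀ T ⊆ S, T.Nonempty → ε ^ #T ≤ downWeight ℓ ρ T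

theorem not_isWellRepresented_iff {ℓ : ℕ} {ρ : Finset U → K} {ε : K} {S : Finset U} :
    ¬ IsWellRepresented ℓ ρ ε S ↔ ∃ T ⊆ S, T.Nonempty ∧ downWeight ℓ ρ T < ε ^ #T := by
  simp only [IsWellRepresented, not_forall, not_le, exists_prop]

variable [IsStrictOrderedRing K]

theorem sum_superset_le_of_downWeight_le {ℓ : ℕ} {ρ : Finset U → K} {ε : K} {T : Finset U}
    (hε : 0 ≤ ε) (hT : #T ≤ ℓ) (hρT : downWeight ℓ ρ T ≤ ε ^ #T) :
    ∑ S with T ⊆ S, ρ S ≤ (ℓ * ε) ^ #T := by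
  have hchoose : (0 : K) < ℓ.choose #T := mod_cast Nat.choose_pos hT
  calc ∑ S with T ⊆ S, ρ S ≤ ℓ.choose #T * ε ^ #T := (inv_mul_le_iff₀ hchoose).mp hρT
    _ ≤ (ℓ : K) ^ #T * ε ^ #T := by
      gcongr
      exact mod_cast Nat.choose_le_pow ℓ #T
    _ = (ℓ * ε) ^ #T := (mul_pow _ _ _).symm

theorem well_represented_sets_high_probability_general {ℓ : ℕ} {ρ : Finset U → K} {ε : K}
    {B : Finset (Finset U)} (hρ : ∀ S, 0 ≤ ρ S) (hε : 0 ≤ ε) (hcard : ∀ S ∈ B, #S ≤ ℓ)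
    (hbad : ∀ S ∈ B, ¬ IsWellRepresented ℓ ρ ε S) :
    ∑ S ∈ B, ρ S ≤ (1 + ℓ * ε) ^ Fintype.card U - 1 := by
  let W : Finset (Finset U) := {T | T.Nonempty ∧ #T ≤ ℓ ∧ downWeight ℓ ρ T < ε ^ #T}
  have hcover : B ⊆ W.biUnion fun T => {S | T ⊆ S} := by
    intro S hS
    obtain ⟨T, hTS, hTne, hlt⟩ := not_isWellRepresented_iff.mp (hbad S hS)
    have hTW : T ∈ W := by simp [W, hTne, hlt, (card_le_card hTS).trans (hcard S hS)]
    exact mem_biUnion.mpr ⟨T, hTW, by simpa using hTS⟩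
  calc ∑ S ∈ B, ρ S ≤ ∑ S ∈ W.biUnion fun T => {S | T ⊆ S}, ρ S :=
        sum_le_sum_of_subset_of_nonneg hcover fun S _ _ => hρ S
    _ ≤ ∑ T ∈ W, ∑ S with T ⊆ S, ρ S := sum_biUnion_le fun _ _ S _ => hρ S
    _ ≤ ∑ T ∈ W, (ℓ * ε) ^ #T := sum_le_sum fun T hT =>
        have ⟨_, hTℓ, hlt⟩ := (mem_filter.mp hT).2
        sum_superset_le_of_downWeight_le hε hTℓ hlt.le
    _ ≤ ∑ T : Finset U with T.Nonempty, (ℓ * ε) ^ #T :=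
        sum_le_sum_of_subset_of_nonneg (monotone_filter_right univ fun _ _ hT => hT.1)
          fun _ _ _ => by positivity
    _ = (1 + ℓ * ε) ^ Fintype.card U - 1 := sum_pow_card_filter_nonempty U _

end DownOperator

/-- The set `Ω̃_ε` of `ℓ`-subsets all of whose nonempty subsets `T` are
well-represented (`ρ_{|T|}(T) ≥ ε^{|T|}`) captures all but `2mℓε` of the mass of `ρ`. -/
theorem well_represented_sets_high_probability (U : Type*) [Fintype U] [DecidableEq U]
    (m ℓ : ℕ) (hm : Fintype.card U = m) (hℓ : 0 < ℓ)
    (ρ : Finset U → ℝ)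
    (hnn : ∀ S, 0 ≤ ρ S) (hsupp : ∀ S, ρ S ≠ 0 → S.card = ℓ)
    (hsum : ∑ S, ρ S = 1)
    (ε : ℝ) (hε0 : 0 ≤ ε) (hε1 : ε ≤ 1 / (2 * m * ℓ)) :
    ∑ S ∈ univ.filter (fun S : Finset U => S.card = ℓ ∧
        ¬ (∀ T : Finset U, T ⊆ S → T.Nonempty →
          ε ^ T.card ≤ ((ℓ.choose T.card : ℝ))⁻¹ *
            ∑ S' ∈ univ.filter (fun S' : Finset U => T ⊆ S'), ρ S')),
      ρ S ≤ 2 * m * ℓ * ε := by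
  have hsmall : ε * (2 * m * ℓ) ≤ 1 := mul_le_of_le_div₀ zero_le_one (by positivity) hε1
  have hpow : (1 + ℓ * ε) ^ m ≤ 1 + 2 * m * (ℓ * ε) :=
    one_add_pow_le_one_add_two_mul (by positivity) (by linarith)
  calc _ ≤ (1 + ℓ * ε) ^ Fintype.card U - 1 :=
        well_represented_sets_high_probability_general hnn hε0
          (fun S hS => (mem_filter.mp hS).2.1.le) fun S hS => (mem_filter.mp hS).2.2
    _ ≤ 2 * m * ℓ * ε := by rw [hm]; linarith
end
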